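/- arXiv:2106.10376 — 2 statements merged into one kernel-verified Lean document; each statement's English description precedes it below -/
import Mathlib

section
/- Let G be a finite connected simple graph and let H₀ be a minimal 1-densest subgraph of G with H₀ ≠ G. Then for every fair tree γ of G, the restriction γ ∩ E(H₀) (the set of edges of γ joining two vertices of H₀) is a fair spanning tree of the graph H₀, i.e., it lies in the support of some fair pmf on the spanning trees of H₀. -/
open scoped Classical

noncomputable section

variable {V : Type*} [Fintype V] [DecidableEq V]

/-- `T` is (the edge set of) a spanning tree of the vertex-induced subgraph of `G`
on the vertex set `S`: its edges are edges of `G` with both endpoints in `S`,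
it is acyclic, and every two vertices of `S` are joined by a path using edges of `T`. -/
def IsSpanningTreeOn (G : SimpleGraph V) (S : Finset V) (T : Finset (Sym2 V)) : Prop :=
  (↑T : Set (Sym2 V)) ⊆ G.edgeSet ∧ (∀ e ∈ T, ∀ v ∈ e, v ∈ S) ∧
    (SimpleGraph.fromEdgeSet (↑T : Set (Sym2 V))).IsAcyclic ∧
    ∀ u ∈ S, ∀ w ∈ S, (SimpleGraph.fromEdgeSet (↑T : Set (Sym2 V))).Reachable u w

/-- A probability mass function on the spanning trees of the induced subgraph of `G` on `S`. -/
structure TreePMFOn (G : SimpleGraph V) (S : Finset V) where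
  toFun : Finset (Sym2 V) → ℝ
  nonneg : ∀ T, 0 ≤ toFun T
  supp : ∀ T, toFun T ≠ 0 → IsSpanningTreeOn G S T
  sum_one : ∑ T : Finset (Sym2 V), toFun T = 1

/-- Edge probability `η_μ(e)`. -/
def edgeProbOn {G : SimpleGraph V} {S : Finset V} (μ : TreePMFOn G S) (e : Sym2 V) : ℝ :=
  ∑ T : Finset (Sym2 V), if e ∈ T then μ.toFun T else 0

/-- Edges of `G` with both endpoints in `S`. -/
def inducedEdges (G : SimpleGraph V) (S : Finset V) : Finset (Sym2 V) :=
  G.edgeFinset.filter fun e => ∀ v ∈ e, v ∈ S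

/-- Variance of the edge probabilities of `μ` over the edges within `S`. -/
def edgeVarOn {G : SimpleGraph V} {S : Finset V} (μ : TreePMFOn G S) : ℝ :=
  (∑ e ∈ inducedEdges G S, (edgeProbOn μ e) ^ 2) / ((inducedEdges G S).card : ℝ) -
    ((∑ e ∈ inducedEdges G S, edgeProbOn μ e) / ((inducedEdges G S).card : ℝ)) ^ 2

/-- A pmf is fair if it minimizes the variance of the edge probabilities. -/
def IsFairOn {G : SimpleGraph V} {S : Finset V} (μ : TreePMFOn G S) : Prop :=
  ∀ ν : TreePMFOn G S, edgeVarOn μ ≤ edgeVarOn ν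

/-- A fair tree: a spanning tree in the support of some fair pmf. -/
def IsFairTreeOn (G : SimpleGraph V) (S : Finset V) (T : Finset (Sym2 V)) : Prop :=
  ∃ μ : TreePMFOn G S, IsFairOn μ ∧ μ.toFun T ≠ 0

/-- The 1-density `θ(H) = |E(H)|/(|V(H)|-1)` of the induced subgraph on `S`. -/
def density (G : SimpleGraph V) (S : Finset V) : ℝ :=
  ((inducedEdges G S).card : ℝ) / ((S.card : ℝ) - 1)

/-- `S` induces a member of `H(G)`: connected, vertex-induced, with at least one edge. -/
def InH (G : SimpleGraph V) (S : Finset V) : Prop :=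
  (inducedEdges G S).Nonempty ∧ (G.induce (↑S : Set V)).Connected

/-- `S` induces a 1-densest subgraph of `G`. -/
def IsDensest (G : SimpleGraph V) (S : Finset V) : Prop :=
  InH G S ∧ ∀ S' : Finset V, InH G S' → density G S' ≤ density G S

/-- `S` induces a minimal 1-densest subgraph of `G`. -/
def IsMinimalDensest (G : SimpleGraph V) (S : Finset V) : Prop :=
  IsDensest G S ∧ ∀ S' : Finset V, S' ⊆ S → S' ≠ S → ¬ IsDensest G S'

/-- The induced subgraph on `S` is homogeneous: some pmf on its spanning trees
has constant edge probabilities. -/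
def IsHomogeneousOn (G : SimpleGraph V) (S : Finset V) : Prop :=
  ∃ μ : TreePMFOn G S, ∃ c : ℝ, ∀ e ∈ inducedEdges G S, edgeProbOn μ e = c

/-- The induced subgraph on `S` has the strict 1-density property. -/
def StrictDensityOn (G : SimpleGraph V) (S : Finset V) : Prop :=
  ∀ S' : Finset V, S' ⊆ S → InH G S' → S' ≠ S → density G S' < density G S

lemma aux_reach {H G' : SimpleGraph V} {U : Set V}
    (hcl : ∀ x y, x ∈ U → H.Adj x y → y ∈ U ∧ G'.Adj x y) {x y : V} (hx : x ∈ U)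
    (h : H.Reachable x y) : ∃ hy : y ∈ U, (G'.induce U).Reachable ⟨x, hx⟩ ⟨y, hy⟩ := by
  rw [SimpleGraph.reachable_iff_reflTransGen] at h
  induction h with
  | refl => exact ⟨hx, SimpleGraph.Reachable.refl _⟩
  | tail _ hab ih =>
    obtain ⟨hb, hr⟩ := ih
    obtain ⟨hc, hadj⟩ := hcl _ _ hb hab
    refine ⟨hc, hr.trans (SimpleGraph.Adj.reachable ?_)⟩
    simpa using hadj

lemma aux_card (S : Finset V) (T : Finset (Sym2 V)) (hd : ∀ e ∈ T, ¬ e.IsDiag)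
    (hS : ∀ e ∈ T, ∀ v ∈ e, v ∈ S) :
    Nat.card ((SimpleGraph.fromEdgeSet (T : Set (Sym2 V))).induce (S : Set V)).edgeSet = T.card := by
  have hsupp : (SimpleGraph.fromEdgeSet (T : Set (Sym2 V))).support ⊆ (S : Set V) := by
    intro v hv
    rw [SimpleGraph.mem_support] at hv
    obtain ⟨w, hw⟩ := hv
    rw [SimpleGraph.fromEdgeSet_adj] at hw
    exact hS _ hw.1 v (by simp)
  have h := SimpleGraph.card_edgeFinset_induce_of_support_subset hsupp
  rw [Nat.card_eq_fintype_card, ← SimpleGraph.edgeFinset_card]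
  refine Eq.trans (by congr!) (h.trans ?_)
  congr 1
  ext e
  simp only [SimpleGraph.mem_edgeFinset, SimpleGraph.edgeSet_fromEdgeSet]
  constructor
  · intro h; exact h.1
  · intro h; exact ⟨h, fun h' => hd e h (by simpa using h')⟩

lemma aux_forest {W : Type*} [Finite W] [Nonempty W] (H : SimpleGraph W) (h : H.IsAcyclic) :
    Nat.card H.edgeSet + 1 ≤ Nat.card W ∧ (Nat.card H.edgeSet + 1 = Nat.card W → H.Connected) := by
  obtain ⟨F, hHF, -, hF⟩ := (SimpleGraph.connected_top (V := W)).exists_isTree_le_of_le_of_isAcyclic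
    le_top h
  have hc := (SimpleGraph.isTree_iff_connected_and_card.1 hF).2
  have hsub : H.edgeSet ⊆ F.edgeSet := SimpleGraph.edgeSet_mono hHF
  have hle : Nat.card H.edgeSet ≤ Nat.card F.edgeSet :=
    Nat.card_mono (Set.toFinite _) hsub
  refine ⟨by omega, fun heq => ?_⟩
  have : H.edgeSet = F.edgeSet := by
    apply Set.eq_of_subset_of_ncard_le hsub
    · rw [← Nat.card_coe_set_eq, ← Nat.card_coe_set_eq]; omega
  rw [SimpleGraph.edgeSet_inj.1 this]
  exact hF.connected

lemma aux_A (S : Finset V) (hSn : S.Nonempty) (T : Finset (Sym2 V)) (hd : ∀ e ∈ T, ¬ e.IsDiag)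
    (hS : ∀ e ∈ T, ∀ v ∈ e, v ∈ S)
    (ha : (SimpleGraph.fromEdgeSet (T : Set (Sym2 V))).IsAcyclic) :
    T.card + 1 ≤ S.card ∧ (T.card + 1 = S.card → ∀ u ∈ S, ∀ w ∈ S,
      (SimpleGraph.fromEdgeSet (T : Set (Sym2 V))).Reachable u w) := by
  have : Nonempty (S : Set V) := hSn.to_subtype
  have h := aux_forest _ (ha.induce (S : Set V))
  rw [aux_card S T hd hS] at h
  have hc : Nat.card (S : Set V) = S.card := by simp
  rw [hc] at h
  refine ⟨h.1, fun heq u hu w hw => ?_⟩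
  exact ((h.2 heq).preconnected ⟨u, hu⟩ ⟨w, hw⟩).map (SimpleGraph.Embedding.induce (S : Set V)).toHom

lemma aux_B (S : Finset V) (T : Finset (Sym2 V)) (hd : ∀ e ∈ T, ¬ e.IsDiag)
    (hS : ∀ e ∈ T, ∀ v ∈ e, v ∈ S)
    (hc : ((SimpleGraph.fromEdgeSet (T : Set (Sym2 V))).induce (S : Set V)).Connected) :
    S.card ≤ T.card + 1 := by
  have h := hc.card_vert_le_card_edgeSet_add_one
  rw [aux_card S T hd hS] at h
  simpa using h

lemma aux_diag {G : SimpleGraph V} {T : Finset (Sym2 V)} (h : (T : Set (Sym2 V)) ⊆ G.edgeSet) :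
    ∀ e ∈ T, ¬ e.IsDiag := fun e he => G.not_isDiag_of_mem_edgeSet (h he)

lemma aux_card_tree {G : SimpleGraph V} {T : Finset (Sym2 V)} [Nonempty V]
    (h : IsSpanningTreeOn G Finset.univ T) : T.card + 1 = Fintype.card V := by
  obtain ⟨h1, h2, h3, h4⟩ := h
  have hA := (aux_A Finset.univ Finset.univ_nonempty T (aux_diag h1) h2 h3).1
  have hB := aux_B Finset.univ T (aux_diag h1) h2 (by
    rw [SimpleGraph.connected_iff]
    refine ⟨?_, ⟨⟨Classical.arbitrary V, by simp⟩⟩⟩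
    rintro ⟨u, hu⟩ ⟨w, hw⟩
    exact (aux_reach (H := SimpleGraph.fromEdgeSet (T : Set (Sym2 V))) (fun x y _ hxy => ⟨by simp, hxy⟩) hu (h4 u (by simp) w (by simp))).2)
  rw [Finset.card_univ] at hA hB
  omega

/-- Tree swap: exchanging a non-`A` edge on the cycle. -/
lemma aux_swap {G : SimpleGraph V} {T : Finset (Sym2 V)} (A : Finset (Sym2 V))
    (h : IsSpanningTreeOn G Finset.univ T) {u w : V} (huw : G.Adj u w)
    (hn : ¬ (SimpleGraph.fromEdgeSet ((T ∩ A : Finset (Sym2 V)) : Set (Sym2 V))).Reachable u w) :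
    ∃ f ∈ T, f ∉ A ∧ IsSpanningTreeOn G Finset.univ (insert s(u, w) (T.erase f)) := by
  have : Nonempty V := ⟨u⟩
  have hcard := aux_card_tree h
  obtain ⟨h1, h2, h3, h4⟩ := h
  obtain ⟨p, hp⟩ := (h4 u (by simp) w (by simp)).exists_isPath
  have : ∃ f ∈ p.edges, f ∉ A := by
    by_contra hcon
    push Not at hcon
    apply hn
    refine ⟨p.transfer _ ?_⟩
    intro e he
    have he' := p.edges_subset_edgeSet he
    rw [SimpleGraph.edgeSet_fromEdgeSet] at he' ⊢
    refine ⟨?_, he'.2⟩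
    have := he'.1
    have := hcon e he
    simp_all
  obtain ⟨f, hfp, hfA⟩ := this
  have hfT : f ∈ T := by
    have he' := p.edges_subset_edgeSet hfp
    rw [SimpleGraph.edgeSet_fromEdgeSet] at he'
    exact he'.1
  refine ⟨f, hfT, hfA, ?_⟩
  have hle : SimpleGraph.fromEdgeSet ((T.erase f : Finset (Sym2 V)) : Set (Sym2 V)) ≤
      SimpleGraph.fromEdgeSet (T : Set (Sym2 V)) :=
    SimpleGraph.fromEdgeSet_mono (by exact_mod_cast Finset.erase_subset _ _)
  have hnr : ¬ (SimpleGraph.fromEdgeSet ((T.erase f : Finset (Sym2 V)) : Set (Sym2 V))).Reachable u w := by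
    intro hr
    obtain ⟨q, hq⟩ := hr.exists_isPath
    have huniq := (h3.subsingleton_path u w).elim ⟨q.mapLe hle, hq.mapLe hle⟩ ⟨p, hp⟩
    have hpe : q.mapLe hle = p := congrArg Subtype.val huniq
    rw [← hpe] at hfp
    have hfq : f ∈ q.edges := by simpa using hfp
    have he' := q.edges_subset_edgeSet hfq
    rw [SimpleGraph.edgeSet_fromEdgeSet] at he'
    have := he'.1
    simp at this
  have hnot : s(u, w) ∉ T.erase f := by
    intro hmem
    apply hnr
    apply SimpleGraph.Adj.reachable
    rw [SimpleGraph.fromEdgeSet_adj]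
    exact ⟨hmem, huw.ne⟩
  have hsub : ((insert s(u, w) (T.erase f) : Finset (Sym2 V)) : Set (Sym2 V)) ⊆ G.edgeSet := by
    intro e he
    simp only [Finset.coe_insert, Set.mem_insert_iff, Finset.mem_coe, Finset.mem_erase] at he
    rcases he with rfl | he
    · exact huw
    · exact h1 he.2
  have hac : (SimpleGraph.fromEdgeSet
      ((insert s(u, w) (T.erase f) : Finset (Sym2 V)) : Set (Sym2 V))).IsAcyclic := by
    have := (h3.anti hle).sup_edge_of_not_reachable hnr
    rw [SimpleGraph.edge, ← SimpleGraph.fromEdgeSet_union] at this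
    convert this using 2
    ext e
    simp
  refine ⟨hsub, by simp, hac, ?_⟩
  refine (aux_A Finset.univ Finset.univ_nonempty _ (aux_diag hsub) (by simp) hac).2 ?_
  rw [Finset.card_insert_of_notMem hnot, Finset.card_erase_of_mem hfT, Finset.card_univ]
  have := Finset.card_pos.2 ⟨f, hfT⟩
  omega

lemma aux_sum {G : SimpleGraph V} {S : Finset V} (μ : TreePMFOn G S) (F : Finset (Sym2 V)) :
    ∑ e ∈ F, edgeProbOn μ e = ∑ T : Finset (Sym2 V), μ.toFun T * ((T ∩ F).card : ℝ) := by
  unfold edgeProbOn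
  rw [Finset.sum_comm]
  refine Finset.sum_congr rfl fun T _ => ?_
  rw [← Finset.sum_filter, Finset.sum_const, nsmul_eq_mul, mul_comm]
  congr 3
  ext e
  simp [and_comm]

lemma aux_prob_nonneg {G : SimpleGraph V} {S : Finset V} (μ : TreePMFOn G S) (e : Sym2 V) :
    0 ≤ edgeProbOn μ e :=
  Finset.sum_nonneg fun T _ => by split_ifs; exacts [μ.nonneg T, le_rfl]

/-- First-order optimality for a swap. -/
lemma aux_opt {G : SimpleGraph V} {S : Finset V} (μ : TreePMFOn G S) (hμ : IsFairOn μ)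
    {T : Finset (Sym2 V)} (hT : μ.toFun T ≠ 0) {e f : Sym2 V} (hf : f ∈ T) (he : e ∉ T)
    (hT' : IsSpanningTreeOn G S (insert e (T.erase f))) :
    edgeProbOn μ f ≤ edgeProbOn μ e := by
  by_contra hlt
  push Not at hlt
  have hef : e ≠ f := fun h => he (h ▸ hf)
  have hTsp := μ.supp T hT
  have hpos : 0 < μ.toFun T := lt_of_le_of_ne (μ.nonneg T) (Ne.symm hT)
  set T' := insert e (T.erase f) with hT'def
  have hne : T' ≠ T := by
    intro h
    apply he
    rw [← h, hT'def]
    exact Finset.mem_insert_self _ _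
  set δ := edgeProbOn μ f - edgeProbOn μ e with hδ
  have hδpos : 0 < δ := by linarith
  obtain ⟨t, ht0, htT, htδ⟩ : ∃ t : ℝ, 0 < t ∧ t ≤ μ.toFun T ∧ t ≤ δ / 2 :=
    ⟨min (μ.toFun T) (δ / 2), by positivity, min_le_left _ _, min_le_right _ _⟩
  let ν : TreePMFOn G S :=
    { toFun := fun R => μ.toFun R + ((if R = T' then t else 0) - (if R = T then t else 0))
      nonneg := by
        intro R
        have := μ.nonneg R
        by_cases h1 : R = T
        · subst h1
          simp only [if_neg hne.symm, if_true]
          linarith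
        · simp only [if_neg h1]
          split_ifs <;> linarith
      supp := by
        intro R hR
        by_cases h1 : R = T
        · rw [h1]; exact hTsp
        · by_cases h2 : R = T'
          · rw [h2]; exact hT'
          · apply μ.supp
            simpa [h1, h2] using hR
      sum_one := by
        rw [Finset.sum_add_distrib, Finset.sum_sub_distrib, μ.sum_one]
        simp }
  have hν : ∀ g, edgeProbOn ν g = edgeProbOn μ g + ((if g = e then t else 0) - (if g = f then t else 0)) := by
    intro g
    have h1 : edgeProbOn ν g = edgeProbOn μ g +
        ((if g ∈ T' then t else 0) - (if g ∈ T then t else 0)) := by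
      unfold edgeProbOn
      have : ∀ R : Finset (Sym2 V), (if g ∈ R then ν.toFun R else 0) =
          (if g ∈ R then μ.toFun R else 0) + ((if R = T' then (if g ∈ T' then t else 0) else 0)
            - (if R = T then (if g ∈ T then t else 0) else 0)) := by
        intro R
        change (if g ∈ R then μ.toFun R + ((if R = T' then t else 0) - (if R = T then t else 0)) else 0) = _
        by_cases h1 : R = T
        · subst h1
          simp only [if_neg hne.symm, if_true]
          split_ifs <;> ring
        · by_cases h2 : R = T'
          · rw [h2]
            simp only [if_neg hne, if_true]
            split_ifs <;> ring
          · simp [h1, h2]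
      rw [Finset.sum_congr rfl fun R _ => this R, Finset.sum_add_distrib, Finset.sum_sub_distrib]
      simp
    rw [h1]
    congr 1
    by_cases hge : g = e
    · subst hge
      simp [hT'def, he, hef]
    · by_cases hgf : g = f
      · subst hgf
        simp [hT'def, hge, hf]
      · simp [hT'def, hge, hgf]
  have heI : e ∈ inducedEdges G S := by
    have hm : e ∈ T' := Finset.mem_insert_self _ _
    unfold inducedEdges
    rw [Finset.mem_filter, SimpleGraph.mem_edgeFinset]
    exact ⟨hT'.1 hm, hT'.2.1 e hm⟩
  have hfI : f ∈ inducedEdges G S := by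
    unfold inducedEdges
    rw [Finset.mem_filter, SimpleGraph.mem_edgeFinset]
    exact ⟨hTsp.1 hf, hTsp.2.1 f hf⟩
  have hsum : ∑ g ∈ inducedEdges G S, edgeProbOn ν g = ∑ g ∈ inducedEdges G S, edgeProbOn μ g := by
    simp_rw [hν]
    rw [Finset.sum_add_distrib, Finset.sum_sub_distrib, Finset.sum_ite_eq', Finset.sum_ite_eq',
      if_pos heI, if_pos hfI]
    ring
  have hsq : ∑ g ∈ inducedEdges G S, (edgeProbOn ν g) ^ 2 =
      ∑ g ∈ inducedEdges G S, (edgeProbOn μ g) ^ 2 + (2 * t * t - 2 * t * δ) := by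
    have : ∀ g, (edgeProbOn ν g) ^ 2 = (edgeProbOn μ g) ^ 2 +
        ((if g = e then 2 * t * edgeProbOn μ e + t * t else 0) +
          (if g = f then t * t - 2 * t * edgeProbOn μ f else 0)) := by
      intro g
      rw [hν]
      by_cases hge : g = e
      · subst hge
        simp only [if_neg hef, if_true]
        ring
      · by_cases hgf : g = f
        · subst hgf
          simp only [if_neg hge, if_true]
          ring
        · simp [hge, hgf]
    rw [Finset.sum_congr rfl fun g _ => this g, Finset.sum_add_distrib, Finset.sum_add_distrib,
      Finset.sum_ite_eq', Finset.sum_ite_eq', if_pos heI, if_pos hfI, hδ]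
    ring
  have hfair := hμ ν
  unfold edgeVarOn at hfair
  rw [hsum, hsq] at hfair
  have hcpos : (0 : ℝ) < ((inducedEdges G S).card : ℝ) := by
    exact_mod_cast Finset.card_pos.2 ⟨e, heI⟩
  rw [sub_le_sub_iff_right, div_le_div_iff_of_pos_right hcpos] at hfair
  nlinarith

lemma aux_fair_of_const {G : SimpleGraph V} {S : Finset V} (ν : TreePMFOn G S) (c : ℝ)
    (hE : (inducedEdges G S).Nonempty)
    (h : ∀ e ∈ inducedEdges G S, edgeProbOn ν e = c) : IsFairOn ν := by
  intro ρ
  have hcpos : (0 : ℝ) < ((inducedEdges G S).card : ℝ) := by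
    exact_mod_cast Finset.card_pos.2 hE
  have h0 : edgeVarOn ν = 0 := by
    unfold edgeVarOn
    rw [Finset.sum_congr rfl h, Finset.sum_congr rfl (fun e he => by rw [h e he])]
    simp only [Finset.sum_const, nsmul_eq_mul]
    field_simp
    ring
  rw [h0]
  unfold edgeVarOn
  have hcs := sq_sum_le_card_mul_sum_sq (s := inducedEdges G S) (f := fun e => edgeProbOn ρ e)
  rw [sub_nonneg, div_pow, div_le_div_iff₀ (by positivity) hcpos]
  nlinarith

/-- Pushforward of a pmf on trees of `G` under restriction to `S`. -/
lemma aux_push {G : SimpleGraph V} {S : Finset V} (μ : TreePMFOn G Finset.univ)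
    (r : Finset (Sym2 V) → Finset (Sym2 V)) (hr : ∀ T, r T = T.filter fun e => ∀ v ∈ e, v ∈ S)
    (hsp : ∀ T, μ.toFun T ≠ 0 → IsSpanningTreeOn G S (r T)) :
    ∃ ν : TreePMFOn G S, (∀ T, μ.toFun T ≤ ν.toFun (r T)) ∧
      ∀ e ∈ inducedEdges G S, edgeProbOn ν e = edgeProbOn μ e := by
  refine ⟨{ toFun := fun R => ∑ T, if r T = R then μ.toFun T else 0
            nonneg := ?_, supp := ?_, sum_one := ?_ }, ?_, ?_⟩
  · intro R
    exact Finset.sum_nonneg fun T _ => by split_ifs; exacts [μ.nonneg T, le_rfl]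
  · intro R hR
    obtain ⟨T, -, hT⟩ := Finset.exists_ne_zero_of_sum_ne_zero hR
    by_cases h : r T = R
    · rw [if_pos h] at hT
      rw [← h]; exact hsp T hT
    · rw [if_neg h] at hT
      exact absurd rfl hT
  · rw [Finset.sum_comm, ← μ.sum_one]
    refine Finset.sum_congr rfl fun T _ => ?_
    simp
  · intro T
    have := Finset.single_le_sum (f := fun T' => if r T' = r T then μ.toFun T' else 0)
      (s := Finset.univ) (fun T' _ => by
        split_ifs
        exacts [μ.nonneg T', le_rfl]) (Finset.mem_univ T)
    simpa using this
  · intro e he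
    have heS : ∀ v ∈ e, v ∈ S := (Finset.mem_filter.1 he).2
    unfold edgeProbOn
    have : ∀ R : Finset (Sym2 V), (if e ∈ R then ∑ T, (if r T = R then μ.toFun T else 0) else 0) =
        ∑ T, if r T = R then (if e ∈ T then μ.toFun T else 0) else 0 := by
      intro R
      by_cases heR : e ∈ R
      · rw [if_pos heR]
        refine Finset.sum_congr rfl fun T _ => ?_
        by_cases h : r T = R
        · rw [if_pos h, if_pos h, if_pos]
          rw [← h, hr] at heR
          exact (Finset.mem_filter.1 heR).1
        · simp [h]
      · rw [if_neg heR]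
        symm
        refine Finset.sum_eq_zero fun T _ => ?_
        by_cases h : r T = R
        · rw [if_pos h, if_neg]
          intro heT
          apply heR
          rw [← h, hr]
          exact Finset.mem_filter.2 ⟨heT, heS⟩
        · simp [h]
    refine (Finset.sum_congr rfl fun R _ => this R).trans ?_
    rw [Finset.sum_comm]
    refine Finset.sum_congr rfl fun T _ => ?_
    simp

/-- There is a set in `H(G)` on which the minimum-probability edges suffice. -/
lemma aux_min {G : SimpleGraph V} (μ : TreePMFOn G Finset.univ) (hμ : IsFairOn μ) (a : ℝ)
    (e₀ : Sym2 V) (he₀ : e₀ ∈ G.edgeSet) (hea : edgeProbOn μ e₀ = a)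
    (hmin : ∀ e ∈ G.edgeSet, a ≤ edgeProbOn μ e) :
    ∃ U : Finset V, InH G U ∧ 2 ≤ U.card ∧ (U.card : ℝ) - 1 ≤ a * ((inducedEdges G U).card : ℝ) := by
  set A : Finset (Sym2 V) := G.edgeFinset.filter fun e => edgeProbOn μ e = a with hA
  have hAG : ∀ e ∈ A, e ∈ G.edgeSet ∧ edgeProbOn μ e = a := by
    intro e he
    rw [hA, Finset.mem_filter, SimpleGraph.mem_edgeFinset] at he
    exact he
  have hAd : ∀ e ∈ A, ¬ e.IsDiag := fun e he => G.not_isDiag_of_mem_edgeSet (hAG e he).1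
  set HA := SimpleGraph.fromEdgeSet (A : Set (Sym2 V)) with hHA
  have key : ∀ T, μ.toFun T ≠ 0 → ∀ x y, HA.Adj x y →
      (SimpleGraph.fromEdgeSet ((T ∩ A : Finset (Sym2 V)) : Set (Sym2 V))).Reachable x y := by
    intro T hT x y hxy
    rw [hHA, SimpleGraph.fromEdgeSet_adj] at hxy
    have hxyA : s(x, y) ∈ A := hxy.1
    by_contra hn
    obtain ⟨f, hfT, hfA, hsp⟩ := aux_swap A (μ.supp T hT) (hAG _ hxyA).1 hn
    have hnot : s(x, y) ∉ T := by
      intro hm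
      apply hn
      apply SimpleGraph.Adj.reachable
      rw [SimpleGraph.fromEdgeSet_adj]
      exact ⟨by simpa using ⟨hm, hxyA⟩, hxy.2⟩
    have hle := aux_opt μ hμ hT hfT hnot hsp
    rw [(hAG _ hxyA).2] at hle
    have hfG : f ∈ G.edgeSet := (μ.supp T hT).1 hfT
    apply hfA
    rw [hA, Finset.mem_filter, SimpleGraph.mem_edgeFinset]
    exact ⟨hfG, le_antisymm hle (hmin f hfG)⟩
  induction e₀ using Sym2.ind with
  | _ u w =>
  have huw : G.Adj u w := he₀
  have huwA : s(u, w) ∈ A := by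
    rw [hA, Finset.mem_filter, SimpleGraph.mem_edgeFinset]
    exact ⟨he₀, hea⟩
  have hHuw : HA.Adj u w := by
    rw [hHA, SimpleGraph.fromEdgeSet_adj]; exact ⟨huwA, huw.ne⟩
  let U : Finset V := Finset.univ.filter fun v => HA.Reachable u v
  have hU : ∀ v, v ∈ U ↔ HA.Reachable u v := fun v => by simp [U]
  have huU : u ∈ U := (hU u).2 (SimpleGraph.Reachable.refl _)
  have hwU : w ∈ U := (hU w).2 hHuw.reachable
  have hcl : ∀ x y, x ∈ U → HA.Adj x y → y ∈ U := fun x y hx hxy =>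
    (hU y).2 (((hU x).1 hx).trans hxy.reachable)
  have hU2 : 2 ≤ U.card := by
    have : 1 < U.card := Finset.one_lt_card.2 ⟨u, huU, w, hwU, huw.ne⟩
    omega
  refine ⟨U, ⟨⟨s(u, w), ?_⟩, ?_⟩, hU2, ?_⟩
  · unfold inducedEdges
    rw [Finset.mem_filter, SimpleGraph.mem_edgeFinset]
    refine ⟨he₀, ?_⟩
    intro v hv
    rcases Sym2.mem_iff.1 hv with rfl | rfl
    exacts [huU, hwU]
  · have hcon : ∀ v (hv : v ∈ (U : Set V)),
        (G.induce (U : Set V)).Reachable ⟨u, huU⟩ ⟨v, hv⟩ := fun v hv =>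
      (aux_reach (H := HA) (G' := G) (U := (U : Set V)) (fun x y hx hxy =>
        ⟨hcl x y hx hxy, (hAG s(x, y) (by
          rw [hHA, SimpleGraph.fromEdgeSet_adj] at hxy; exact hxy.1)).1⟩) huU ((hU v).1 hv)).2
    rw [SimpleGraph.connected_iff]
    refine ⟨?_, ⟨⟨u, huU⟩⟩⟩
    rintro ⟨x, hx⟩ ⟨y, hy⟩
    exact (hcon x hx).symm.trans (hcon y hy)
  · have hcount : ∀ T, μ.toFun T ≠ 0 →
        U.card ≤ (T ∩ (A.filter fun e => ∀ v ∈ e, v ∈ U)).card + 1 := by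
      intro T hT
      have hmem : ∀ e, e ∈ T ∩ (A.filter fun e => ∀ v ∈ e, v ∈ U) ↔ e ∈ T ∧ e ∈ A ∧ ∀ v ∈ e, v ∈ U := by
        intro e; rw [Finset.mem_inter, Finset.mem_filter]
      refine aux_B U _ (fun e he => hAd e ((hmem e).1 he).2.1) (fun e he => ((hmem e).1 he).2.2) ?_
      have hreach : ∀ v, HA.Reachable u v →
          (SimpleGraph.fromEdgeSet ((T ∩ A : Finset (Sym2 V)) : Set (Sym2 V))).Reachable u v := by
        intro v hv
        rw [SimpleGraph.reachable_iff_reflTransGen] at hv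
        induction hv with
        | refl => exact SimpleGraph.Reachable.refl _
        | tail _ hab ih => exact ih.trans (key T hT _ _ hab)
      have hcon : ∀ v (hv : v ∈ (U : Set V)),
          ((SimpleGraph.fromEdgeSet ((T ∩ (A.filter fun e => ∀ v ∈ e, v ∈ U) : Finset (Sym2 V)) :
            Set (Sym2 V))).induce (U : Set V)).Reachable ⟨u, huU⟩ ⟨v, hv⟩ := fun v hv =>
        (aux_reach (U := (U : Set V)) (fun x y hx hxy => by
          rw [SimpleGraph.fromEdgeSet_adj, Finset.mem_coe, Finset.mem_inter] at hxy
          have hadj : HA.Adj x y := by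
            rw [hHA, SimpleGraph.fromEdgeSet_adj]; exact ⟨hxy.1.2, hxy.2⟩
          have hy := hcl x y hx hadj
          refine ⟨hy, ?_⟩
          rw [SimpleGraph.fromEdgeSet_adj, Finset.mem_coe, hmem]
          refine ⟨⟨hxy.1.1, hxy.1.2, ?_⟩, hxy.2⟩
          intro v hv
          rcases Sym2.mem_iff.1 hv with rfl | rfl
          exacts [hx, hy]) huU (hreach v ((hU v).1 hv))).2
      rw [SimpleGraph.connected_iff]
      refine ⟨?_, ⟨⟨u, huU⟩⟩⟩
      rintro ⟨x, hx⟩ ⟨y, hy⟩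
      exact (hcon x hx).symm.trans (hcon y hy)
    have hsum := aux_sum μ (A.filter fun e => ∀ v ∈ e, v ∈ U)
    have h1 : (U.card : ℝ) - 1 ≤ ∑ T : Finset (Sym2 V),
        μ.toFun T * ((T ∩ (A.filter fun e => ∀ v ∈ e, v ∈ U)).card : ℝ) := by
      calc (U.card : ℝ) - 1 = ∑ T : Finset (Sym2 V), μ.toFun T * ((U.card : ℝ) - 1) := by
            rw [← Finset.sum_mul, μ.sum_one, one_mul]
        _ ≤ _ := by
            refine Finset.sum_le_sum fun T _ => ?_
            by_cases hT : μ.toFun T = 0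
            · simp [hT]
            · refine mul_le_mul_of_nonneg_left ?_ (μ.nonneg T)
              have : (U.card : ℝ) ≤ ((T ∩ (A.filter fun e => ∀ v ∈ e, v ∈ U)).card : ℝ) + 1 := by
                exact_mod_cast hcount T hT
              linarith
    have h2 : ∑ e ∈ (A.filter fun e => ∀ v ∈ e, v ∈ U), edgeProbOn μ e =
        a * ((A.filter fun e => ∀ v ∈ e, v ∈ U).card : ℝ) := by
      rw [Finset.sum_congr rfl fun e he => (hAG e (Finset.mem_filter.1 he).1).2]
      rw [Finset.sum_const, nsmul_eq_mul, mul_comm]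
    have h3 : (A.filter fun e => ∀ v ∈ e, v ∈ U).card ≤ (inducedEdges G U).card := by
      apply Finset.card_le_card
      intro e he
      unfold inducedEdges
      rw [Finset.mem_filter] at he ⊢
      exact ⟨SimpleGraph.mem_edgeFinset.2 (hAG e he.1).1, he.2⟩
    have h3' : ((A.filter fun e => ∀ v ∈ e, v ∈ U).card : ℝ) ≤ ((inducedEdges G U).card : ℝ) := by
      exact_mod_cast h3
    have ha : 0 ≤ a := hea ▸ aux_prob_nonneg μ _
    have := mul_le_mul_of_nonneg_left h3' ha
    linarith

/-- If `H₀` (induced on `S`) is a minimal 1-densest subgraph of the finite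
connected simple graph `G` with `H₀ ≠ G`, then for every fair tree `γ` of `G`, the
restriction `γ ∩ E(H₀)` is a fair spanning tree of the graph `H₀`. -/
theorem restriction_is_fair_of_minimalDensest
    {V : Type*} [Fintype V] [DecidableEq V] (G : SimpleGraph V) (hG : G.Connected)
    (S : Finset V) (hmin : IsMinimalDensest G S) (hne : S ≠ Finset.univ) :
    ∀ T : Finset (Sym2 V), IsFairTreeOn G Finset.univ T →
      IsFairTreeOn G S (T.filter fun e => ∀ v ∈ e, v ∈ S) := by

  rintro T₀ ⟨μ, hμ, hT₀⟩
  obtain ⟨⟨⟨hEne, hScon⟩, hdens⟩, -⟩ := hmin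
  obtain ⟨e₁, he₁⟩ := id hEne
  have hEmem : ∀ e, e ∈ inducedEdges G S ↔ e ∈ G.edgeSet ∧ ∀ v ∈ e, v ∈ S := by
    intro e
    unfold inducedEdges
    rw [Finset.mem_filter, SimpleGraph.mem_edgeFinset]
  have hSn : S.Nonempty := by
    obtain ⟨⟨v, hv⟩⟩ := hScon.nonempty
    exact ⟨v, hv⟩
  obtain ⟨e₀, he₀, hmin₀⟩ := Finset.exists_min_image G.edgeFinset (fun e => edgeProbOn μ e)
    ⟨e₁, SimpleGraph.mem_edgeFinset.2 ((hEmem e₁).1 he₁).1⟩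
  set a := edgeProbOn μ e₀ with ha
  have hmina : ∀ e ∈ G.edgeSet, a ≤ edgeProbOn μ e := fun e he =>
    hmin₀ e (SimpleGraph.mem_edgeFinset.2 he)
  obtain ⟨U, hUH, hU2, hUa⟩ := aux_min μ hμ a e₀ (SimpleGraph.mem_edgeFinset.1 he₀) rfl hmina
  have hinter : ∀ T, μ.toFun T ≠ 0 → T ∩ inducedEdges G S = T.filter fun e => ∀ v ∈ e, v ∈ S := by
    intro T hT
    ext e
    rw [Finset.mem_inter, Finset.mem_filter, hEmem]
    exact ⟨fun h => ⟨h.1, h.2.2⟩, fun h => ⟨h.1, (μ.supp T hT).1 h.1, h.2⟩⟩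
  have hac : ∀ T, μ.toFun T ≠ 0 →
      (SimpleGraph.fromEdgeSet ((T ∩ inducedEdges G S : Finset (Sym2 V)) : Set (Sym2 V))).IsAcyclic := by
    intro T hT
    refine (μ.supp T hT).2.2.1.anti (SimpleGraph.fromEdgeSet_mono ?_)
    exact_mod_cast Finset.inter_subset_left
  have hforest : ∀ T, μ.toFun T ≠ 0 → _ := fun T hT =>
    aux_A S hSn (T ∩ inducedEdges G S)
      (fun e he => G.not_isDiag_of_mem_edgeSet ((hEmem e).1 (Finset.mem_inter.1 he).2).1)
      (fun e he => ((hEmem e).1 (Finset.mem_inter.1 he).2).2) (hac T hT)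
  -- `|S| ≥ 2`
  have hS2 : (1 : ℝ) < S.card := by
    induction e₁ using Sym2.ind with
    | _ u w =>
    have h := (hEmem _).1 he₁
    have : 1 < S.card := Finset.one_lt_card.2 ⟨u, h.2 u (by simp), w, h.2 w (by simp),
      (SimpleGraph.mem_edgeSet G |>.1 h.1).ne⟩
    exact_mod_cast this
  have hU2' : (2 : ℝ) ≤ U.card := by exact_mod_cast hU2
  have ha0 : 0 ≤ a := aux_prob_nonneg μ _
  have hlow : (S.card : ℝ) - 1 ≤ a * ((inducedEdges G S).card : ℝ) := by
    have hd := hdens U hUH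
    unfold density at hd
    rw [div_le_div_iff₀ (by linarith) (by linarith)] at hd
    have h1 := mul_le_mul_of_nonneg_left hd ha0
    have h2 := mul_le_mul_of_nonneg_right hUa (by linarith : (0 : ℝ) ≤ (S.card : ℝ) - 1)
    have h3 : ((S.card : ℝ) - 1) * ((U.card : ℝ) - 1) ≤
        (a * ((inducedEdges G S).card : ℝ)) * ((U.card : ℝ) - 1) := by linarith
    exact le_of_mul_le_mul_right h3 (by linarith)
  have hsum := aux_sum μ (inducedEdges G S)
  have hterm : ∀ T ∈ (Finset.univ : Finset (Finset (Sym2 V))),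
      μ.toFun T * ((T ∩ inducedEdges G S).card : ℝ) ≤ μ.toFun T * ((S.card : ℝ) - 1) := by
    intro T _
    by_cases hT : μ.toFun T = 0
    · simp [hT]
    · refine mul_le_mul_of_nonneg_left ?_ (μ.nonneg T)
      have : ((T ∩ inducedEdges G S).card : ℝ) + 1 ≤ S.card := by exact_mod_cast (hforest T hT).1
      linarith
  have hup := Finset.sum_le_sum hterm
  have hconst : ∑ T : Finset (Sym2 V), μ.toFun T * ((S.card : ℝ) - 1) = (S.card : ℝ) - 1 := by
    rw [← Finset.sum_mul, μ.sum_one, one_mul]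
  have hge : ∀ e ∈ inducedEdges G S, a ≤ edgeProbOn μ e := fun e he => hmina e ((hEmem e).1 he).1
  have hsumge := Finset.sum_le_sum hge
  have hsuma : ∑ _e ∈ inducedEdges G S, a = a * ((inducedEdges G S).card : ℝ) := by
    rw [Finset.sum_const, nsmul_eq_mul, mul_comm]
  have hedge : ∀ e ∈ inducedEdges G S, a = edgeProbOn μ e :=
    (Finset.sum_eq_sum_iff_of_le hge).1 (by linarith)
  have hcard := (Finset.sum_eq_sum_iff_of_le hterm).1 (by linarith)
  have hsp : ∀ T, μ.toFun T ≠ 0 → IsSpanningTreeOn G S (T.filter fun e => ∀ v ∈ e, v ∈ S) := by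
    intro T hT
    have h1 := mul_left_cancel₀ hT (hcard T (Finset.mem_univ _))
    have h2 : (T ∩ inducedEdges G S).card + 1 = S.card := by
      have : ((T ∩ inducedEdges G S).card : ℝ) + 1 = S.card := by linarith
      exact_mod_cast this
    have h3 := (hforest T hT).2 h2
    rw [← hinter T hT]
    refine ⟨?_, ?_, hac T hT, h3⟩
    · intro e he
      exact ((hEmem e).1 (Finset.mem_inter.1 he).2).1
    · intro e he
      exact ((hEmem e).1 (Finset.mem_inter.1 he).2).2
  obtain ⟨ν, hν1, hν2⟩ := aux_push μ (fun T => T.filter fun e => ∀ v ∈ e, v ∈ S) (fun _ => rfl) hsp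
  refine ⟨ν, aux_fair_of_const ν a hEne (fun e he => (hν2 e he).trans (hedge e he).symm), ?_⟩
  have h1 := hν1 T₀
  have h2 : 0 < μ.toFun T₀ := lt_of_le_of_ne (μ.nonneg T₀) (Ne.symm hT₀)
  exact ne_of_gt (lt_of_lt_of_le h2 h1)
end
end

section
/- For all integers m,n ≥ 2, the grid graph G_{m,n} is uniformizable: there exist edge weights σ : E(G_{m,n}) → ℝ_{>0} such that the weighted uniform spanning tree pmf μ_σ, defined on the set Γ of spanning trees of G_{m,n} by μ_σ(γ) = (∏_{e∈γ} σ(e)) / (∑_{γ'∈Γ} ∏_{e∈γ'} σ(e)), is a fair pmf, i.e., μ_σ minimizes the variance of the edge probabilities over all pmfs on Γ. -/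
open scoped Classical

noncomputable section

variable {V : Type*} [Fintype V] [DecidableEq V]

/-- The `m`-by-`n` grid graph: the box product of two path graphs. -/
def gridGraph (m n : ℕ) : SimpleGraph (Fin m × Fin n) :=
  SimpleGraph.fromRel fun v w =>
    (v.1 = w.1 ∧ v.2.val + 1 = w.2.val) ∨ (v.2 = w.2 ∧ v.1.val + 1 = w.1.val)


/-! ### A minimisation lemma -/

lemma exists_min_exp {ι : Type*} [Fintype ι] (W : Submodule ℝ (ι → ℝ))
    (hW : ∀ y ∈ W, (∀ i, y i ≤ 0) → y = 0) :
    ∃ y ∈ W, ∀ z ∈ W, ∑ i, Real.exp (y i) ≤ ∑ i, Real.exp (z i) := by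
  have hcont : Continuous (fun y : ι → ℝ => ∑ i, Real.exp (y i)) := by fun_prop
  -- the positive part controls the norm
  have hδ : ∃ δ > 0, ∀ y ∈ W, δ * ‖y‖ ≤ ∑ i, max (y i) 0 := by
    have hclosed : IsClosed (W : Set (ι → ℝ)) := W.closed_of_finiteDimensional
    have hK : IsCompact ((W : Set (ι → ℝ)) ∩ Metric.sphere 0 1) :=
      (isCompact_sphere 0 1).inter_left hclosed
    have hc : Continuous (fun y : ι → ℝ => ∑ i, max (y i) 0) := by fun_prop
    rcases ((W : Set (ι → ℝ)) ∩ Metric.sphere 0 1).eq_empty_or_nonempty with he | hne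
    · refine ⟨1, one_pos, fun y hy => ?_⟩
      by_cases h0 : y = 0
      · subst h0; simp
      · exfalso
        have : (‖y‖⁻¹ • y) ∈ ((W : Set (ι → ℝ)) ∩ Metric.sphere 0 1) := by
          refine ⟨W.smul_mem _ hy, ?_⟩
          simp [norm_smul, h0]
        rw [he] at this
        exact this
    · obtain ⟨y0, hy0, hmin⟩ := hK.exists_isMinOn hne hc.continuousOn
      have hpos : 0 < ∑ i, max (y0 i) 0 := by
        have hnn : 0 ≤ ∑ i, max (y0 i) 0 := Finset.sum_nonneg fun i _ => le_max_right _ _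
        rcases hnn.lt_or_eq with h | h
        · exact h
        · exfalso
          have h1 := (Finset.sum_eq_zero_iff_of_nonneg
            (fun i _ => le_max_right (y0 i) 0)).1 h.symm
          have h2 : y0 = 0 := hW y0 hy0.1 fun i => by
            have := h1 i (Finset.mem_univ i)
            exact max_eq_right_iff.1 this
          have h3 := hy0.2
          simp [h2] at h3
      refine ⟨_, hpos, fun y hy => ?_⟩
      by_cases h0 : y = 0
      · subst h0; simp
      · have hn : 0 < ‖y‖ := norm_pos_iff.2 h0
        have hmem : (‖y‖⁻¹ • y) ∈ ((W : Set (ι → ℝ)) ∩ Metric.sphere 0 1) := by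
          refine ⟨W.smul_mem _ hy, ?_⟩
          simp [norm_smul, h0]
        have h1 : ∑ i, max (y0 i) 0 ≤ ∑ i, max ((‖y‖⁻¹ • y) i) 0 := hmin hmem
        have h2 : ∑ i, max ((‖y‖⁻¹ • y) i) 0 = ‖y‖⁻¹ * ∑ i, max (y i) 0 := by
          rw [Finset.mul_sum]
          refine Finset.sum_congr rfl fun i _ => ?_
          rw [mul_max_of_nonneg _ _ (by positivity)]
          simp
        rw [h2] at h1
        calc (∑ i, max (y0 i) 0) * ‖y‖ ≤ (‖y‖⁻¹ * ∑ i, max (y i) 0) * ‖y‖ := by gcongr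
          _ = _ := by field_simp
  obtain ⟨δ, hδ0, hδ⟩ := hδ
  have hlow : ∀ y ∈ W, δ * ‖y‖ ≤ ∑ i, Real.exp (y i) := fun y hy =>
    (hδ y hy).trans (Finset.sum_le_sum fun i _ => max_le
      (by linarith [Real.add_one_le_exp (y i)]) (Real.exp_pos _).le)
  set R := (∑ i : ι, Real.exp ((0 : ι → ℝ) i)) / δ with hR
  have hR0 : 0 ≤ R := by positivity
  have hK : IsCompact ((W : Set (ι → ℝ)) ∩ Metric.closedBall 0 R) :=
    (isCompact_closedBall 0 R).inter_left W.closed_of_finiteDimensional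
  obtain ⟨y, hy, hmin⟩ := hK.exists_isMinOn ⟨0, W.zero_mem, by simp [hR0]⟩ hcont.continuousOn
  refine ⟨y, hy.1, fun z hz => ?_⟩
  by_cases h : ‖z‖ ≤ R
  · exact hmin ⟨hz, by simpa using h⟩
  · have h1 : ∑ i, Real.exp (y i) ≤ ∑ i, Real.exp ((0 : ι → ℝ) i) :=
      hmin ⟨W.zero_mem, by simp [hR0]⟩
    have h2 := hlow z hz
    push Not at h
    rw [hR, div_lt_iff₀ hδ0] at h
    linarith

lemma exists_critical {ι κ : Type*} [Fintype ι] [Fintype κ] (a : ι → κ → ℝ)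
    (ha : ∀ x : κ → ℝ, (∀ i, ∑ k, a i k * x k ≤ 0) → ∀ i, ∑ k, a i k * x k = 0) :
    ∃ x : κ → ℝ, ∀ k, ∑ i, Real.exp (∑ j, a i j * x j) * a i k = 0 := by
  classical
  let A : (κ → ℝ) →ₗ[ℝ] (ι → ℝ) := Matrix.mulVecLin (Matrix.of a)
  have hA : ∀ x i, A x i = ∑ k, a i k * x k := fun x i => by
    simp [A, Matrix.mulVec, dotProduct]
  obtain ⟨y, ⟨x, rfl⟩, hmin⟩ := exists_min_exp (LinearMap.range A) (by
    rintro _ ⟨x, rfl⟩ h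
    ext i
    simp only [hA] at h ⊢
    exact ha x h i)
  refine ⟨x, fun k => ?_⟩
  have hder : HasDerivAt (fun t : ℝ => ∑ i, Real.exp ((∑ j, a i j * x j) + t * a i k))
      (∑ i, Real.exp (∑ j, a i j * x j) * a i k) 0 := by
    refine HasDerivAt.fun_sum fun i _ => ?_
    have h1 : HasDerivAt (fun t : ℝ => (∑ j, a i j * x j) + t * a i k) (a i k) 0 := by
      simpa using ((hasDerivAt_id (0 : ℝ)).mul_const (a i k)).const_add (∑ j, a i j * x j)
    simpa using h1.exp
  refine IsLocalMin.hasDerivAt_eq_zero (Filter.Eventually.of_forall fun t => ?_) hder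
  have := hmin (A (x + t • Pi.single k 1)) ⟨_, rfl⟩
  simp only [hA] at this
  simp only [zero_mul, add_zero]
  refine this.trans (le_of_eq (Finset.sum_congr rfl fun i _ => ?_))
  congr 1
  simp [mul_add, Finset.sum_add_distrib, Pi.single_apply, mul_comm]

/-! ### Trees from parent functions -/

lemma parent_injOn {U : Type*} (r : U) (p : U → U) (rk : U → ℕ)
    (hp : ∀ v, v ≠ r → rk (p v) < rk v) :
    ∀ v, v ≠ r → ∀ w, w ≠ r → s(v, p v) = s(w, p w) → v = w := by
  intro v hv w hw h
  rcases Sym2.eq_iff.1 h with h | h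
  · exact h.1
  · have h1 := hp v hv
    have h2 := hp w hw
    rw [h.2] at h1
    rw [← h.1] at h2
    omega

lemma parent_tree {U : Type*} [Fintype U] [DecidableEq U] (G : SimpleGraph U)
    (r : U) (p : U → U) (rk : U → ℕ)
    (hp : ∀ v, v ≠ r → rk (p v) < rk v) (hG : ∀ v, v ≠ r → G.Adj v (p v)) :
    IsSpanningTreeOn G Finset.univ ((Finset.univ.erase r).image fun v => s(v, p v)) := by
  set T := (Finset.univ.erase r).image fun v => s(v, p v) with hT
  have hsub : (↑T : Set (Sym2 U)) ⊆ G.edgeSet := by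
    intro e he
    simp only [hT, Finset.coe_image, Set.mem_image, Finset.mem_coe, Finset.mem_erase] at he
    obtain ⟨v, hv, rfl⟩ := he
    exact hG v hv.1
  have hcard : T.card + 1 = Fintype.card U := by
    rw [hT, Finset.card_image_of_injOn]
    · rw [Finset.card_erase_of_mem (Finset.mem_univ r), Finset.card_univ]
      have : 0 < Fintype.card U := Fintype.card_pos_iff.2 ⟨r⟩
      omega
    · intro v hv w hw h
      simp only [Finset.coe_erase, Set.mem_sdiff, Set.mem_singleton_iff] at hv hw
      exact parent_injOn r p rk hp v hv.2 w hw.2 h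
  have hes : (SimpleGraph.fromEdgeSet (↑T : Set (Sym2 U))).edgeSet = ↑T := by
    rw [SimpleGraph.edgeSet_fromEdgeSet]
    ext e
    simp only [Set.mem_sdiff, and_iff_left_iff_imp]
    intro he
    exact G.not_isDiag_of_mem_edgeSet (hsub he)
  have hreach : ∀ k, ∀ v, rk v = k →
      (SimpleGraph.fromEdgeSet (↑T : Set (Sym2 U))).Reachable v r := by
    intro k
    induction k using Nat.strong_induction_on with
    | _ k ih =>
      intro v hv
      by_cases h : v = r
      · rw [h]
      · refine SimpleGraph.Reachable.trans ?_ (ih (rk (p v)) (by have := hp v h; omega) _ rfl)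
        refine SimpleGraph.Adj.reachable ?_
        rw [SimpleGraph.fromEdgeSet_adj]
        refine ⟨?_, (hG v h).ne⟩
        simp only [hT, Finset.coe_image, Set.mem_image, Finset.mem_coe, Finset.mem_erase]
        exact ⟨v, ⟨h, Finset.mem_univ _⟩, rfl⟩
  have hconn : (SimpleGraph.fromEdgeSet (↑T : Set (Sym2 U))).Connected := by
    have : Nonempty U := ⟨r⟩
    exact SimpleGraph.Connected.mk fun u w => (hreach _ u rfl).trans (hreach _ w rfl).symm
  have htree : (SimpleGraph.fromEdgeSet (↑T : Set (Sym2 U))).IsTree := by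
    rw [SimpleGraph.isTree_iff_connected_and_card]
    refine ⟨hconn, ?_⟩
    rw [hes, Nat.card_eq_fintype_card (α := U), ← hcard]
    simp
  exact ⟨hsub, fun _ _ _ _ => Finset.mem_univ _, htree.isAcyclic,
    fun u _ w _ => hconn.preconnected u w⟩

lemma spanningTree_card {U : Type*} [Fintype U] [DecidableEq U] [Nonempty U] (G : SimpleGraph U)
    (T : Finset (Sym2 U)) (hT : IsSpanningTreeOn G Finset.univ T) :
    T.card + 1 = Fintype.card U := by
  have hes : (SimpleGraph.fromEdgeSet (↑T : Set (Sym2 U))).edgeSet = ↑T := by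
    rw [SimpleGraph.edgeSet_fromEdgeSet]
    ext e
    simp only [Set.mem_sdiff, and_iff_left_iff_imp]
    intro he
    exact G.not_isDiag_of_mem_edgeSet (hT.1 he)
  have hconn : (SimpleGraph.fromEdgeSet (↑T : Set (Sym2 U))).Connected :=
    SimpleGraph.Connected.mk fun u w => hT.2.2.2 u (Finset.mem_univ _) w (Finset.mem_univ _)
  have htree : (SimpleGraph.fromEdgeSet (↑T : Set (Sym2 U))).IsTree := ⟨hconn, hT.2.2.1⟩
  have := (SimpleGraph.isTree_iff_connected_and_card.1 htree).2
  rw [hes, Nat.card_eq_fintype_card (α := U)] at this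
  simpa using this

/-! ### Fairness from constant edge probabilities -/

lemma fair_of_const {U : Type*} [Fintype U] [DecidableEq U] {G : SimpleGraph U}
    {S : Finset U} (μ : TreePMFOn G S) (c : ℝ)
    (h : ∀ e ∈ inducedEdges G S, edgeProbOn μ e = c) : IsFairOn μ := by
  intro ν
  have h0 : edgeVarOn μ = 0 := by
    unfold edgeVarOn
    rw [Finset.sum_congr rfl h,
      Finset.sum_congr rfl (fun e he => by rw [h e he] : ∀ e ∈ inducedEdges G S,
        edgeProbOn μ e ^ 2 = c ^ 2)]
    simp only [Finset.sum_const, nsmul_eq_mul]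
    by_cases hc : ((inducedEdges G S).card : ℝ) = 0
    · simp [hc]
    · field_simp; simp
  rw [h0]
  unfold edgeVarOn
  have h1 := sq_sum_le_card_mul_sum_sq (s := inducedEdges G S) (f := fun e => edgeProbOn ν e)
  by_cases hc : ((inducedEdges G S).card : ℝ) = 0
  · simp [hc]
  · have hc' : (0 : ℝ) < ((inducedEdges G S).card : ℝ) :=
      lt_of_le_of_ne (Nat.cast_nonneg _) (Ne.symm hc)
    rw [div_pow, sub_nonneg, div_le_div_iff₀ (by positivity) hc']
    nlinarith

/-! ### General uniformization -/

lemma uniformize {U : Type*} [Fintype U] [DecidableEq U] (G : SimpleGraph U) (c : ℝ)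
    (hne : ∃ T, IsSpanningTreeOn G Finset.univ T)
    (hc : ∀ x : Sym2 U → ℝ,
      (∀ T, IsSpanningTreeOn G Finset.univ T → ∑ e ∈ T, x e ≤ c * ∑ e ∈ G.edgeFinset, x e) →
      (∀ T, IsSpanningTreeOn G Finset.univ T → ∑ e ∈ T, x e = c * ∑ e ∈ G.edgeFinset, x e)) :
    ∃ σ : Sym2 U → ℝ,
      (∀ e ∈ G.edgeFinset, 0 < σ e) ∧
      ∃ μ : TreePMFOn G Finset.univ,
        (∀ T : Finset (Sym2 U),
            μ.toFun T =
              (if IsSpanningTreeOn G Finset.univ T then ∏ e ∈ T, σ e else 0) /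
                ∑ T' ∈ Finset.univ.filter
                    (fun T' : Finset (Sym2 U) => IsSpanningTreeOn G Finset.univ T'),
                  ∏ e ∈ T', σ e) ∧
        IsFairOn μ := by
  let ι := {T : Finset (Sym2 U) // IsSpanningTreeOn G Finset.univ T}
  let a : ι → Sym2 U → ℝ := fun T e =>
    (if e ∈ T.1 then 1 else 0) - c * (if e ∈ G.edgeFinset then 1 else 0)
  have hax : ∀ (T : ι) (x : Sym2 U → ℝ), ∑ e, a T e * x e =
      ∑ e ∈ T.1, x e - c * ∑ e ∈ G.edgeFinset, x e := by
    intro T x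
    simp only [a, sub_mul, Finset.sum_sub_distrib, mul_assoc, ← Finset.mul_sum, ite_mul,
      one_mul, zero_mul, Finset.sum_ite_mem, Finset.univ_inter]
  obtain ⟨x, hx⟩ := exists_critical a (by
    intro x h T
    rw [hax, sub_eq_zero]
    refine hc x (fun T' hT' => ?_) T.1 T.2
    have := h ⟨T', hT'⟩
    rw [hax] at this
    linarith)
  simp only [hax] at hx
  set σ : Sym2 U → ℝ := fun e => Real.exp (x e) with hσ
  set Z : ℝ := ∑ T' ∈ Finset.univ.filter
    (fun T' : Finset (Sym2 U) => IsSpanningTreeOn G Finset.univ T'), ∏ e ∈ T', σ e with hZ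
  have hprod : ∀ T : Finset (Sym2 U), 0 < ∏ e ∈ T, σ e :=
    fun T => Finset.prod_pos fun e _ => Real.exp_pos _
  have hZpos : 0 < Z := by
    obtain ⟨T, hT⟩ := hne
    exact Finset.sum_pos (fun T _ => hprod T) ⟨T, by simpa using hT⟩
  let μ : TreePMFOn G Finset.univ :=
    { toFun := fun T => (if IsSpanningTreeOn G Finset.univ T then ∏ e ∈ T, σ e else 0) / Z
      nonneg := fun T => by
        refine div_nonneg ?_ hZpos.le
        split_ifs
        · exact (hprod T).le
        · exact le_rfl
      supp := fun T h => by
        by_contra hn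
        exact h (by simp [hn])
      sum_one := by
        rw [← Finset.sum_div, ← Finset.sum_filter, ← hZ, div_self hZpos.ne'] }
  refine ⟨σ, fun e _ => Real.exp_pos _, μ, fun T => rfl, fair_of_const μ c fun e he => ?_⟩
  have heG : e ∈ G.edgeFinset := by
    unfold inducedEdges at he
    have := (Finset.mem_filter.1 he).1
    convert this
  have key := hx e
  simp only [a, heG, if_true, mul_one] at key
  have key2 : ∑ T : ι, (∏ e ∈ T.1, σ e) * ((if e ∈ T.1 then 1 else 0) - c) = 0 := by
    have h1 : ∀ T : ι, Real.exp (∑ e ∈ T.1, x e - c * ∑ e ∈ G.edgeFinset, x e) =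
        Real.exp (- (c * ∑ e ∈ G.edgeFinset, x e)) * ∏ e ∈ T.1, σ e := by
      intro T
      rw [hσ, ← Real.exp_sum, ← Real.exp_add]
      congr 1; ring
    simp only [h1, mul_assoc, ← Finset.mul_sum] at key
    rcases mul_eq_zero.1 key with h | h
    · exact absurd h (Real.exp_pos _).ne'
    · exact h
  have h3 : ∀ f : Finset (Sym2 U) → ℝ, ∑ T : ι, f T.1 =
      ∑ T ∈ Finset.univ.filter
        (fun T' : Finset (Sym2 U) => IsSpanningTreeOn G Finset.univ T'), f T := by
    intro f
    exact (Finset.sum_subtype _ (by simp) f).symm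
  rw [h3 (fun T => (∏ e ∈ T, σ e) * ((if e ∈ T then 1 else 0) - c))] at key2
  simp only [mul_sub, Finset.sum_sub_distrib, ← Finset.sum_mul] at key2
  rw [← hZ] at key2
  have h4 : edgeProbOn μ e = (∑ T ∈ Finset.univ.filter
        (fun T' : Finset (Sym2 U) => IsSpanningTreeOn G Finset.univ T'),
        (∏ e ∈ T, σ e) * (if e ∈ T then 1 else 0)) / Z := by
    unfold edgeProbOn
    rw [Finset.sum_div, Finset.sum_filter]
    refine Finset.sum_congr rfl fun T _ => ?_
    simp only [μ]
    split_ifs <;> simp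
  rw [h4, div_eq_iff hZpos.ne']
  linarith

/-! ### The grid -/

/-- One step from `b` towards `J`. -/
def stepTo {n : ℕ} (J b : Fin n) : Fin n :=
  if h : b.val < J.val then ⟨b.val + 1, by omega⟩
  else if J.val < b.val then ⟨b.val - 1, by omega⟩ else b

lemma stepTo_spec {n : ℕ} (J b : Fin n) (h : b ≠ J) :
    (b.val < J.val ∧ (stepTo J b).val = b.val + 1) ∨
    (J.val < b.val ∧ (stepTo J b).val + 1 = b.val) := by
  have : b.val ≠ J.val := fun h' => h (Fin.ext h')
  unfold stepTo
  split_ifs with h1 h2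
  · left; exact ⟨h1, rfl⟩
  · right; refine ⟨h2, ?_⟩; simp only; omega
  · omega

lemma stepTo_eq_of_adj {n : ℕ} (J b : Fin n) (h : b.val + 1 = J.val ∨ J.val + 1 = b.val) :
    stepTo J b = J := by
  have hne : b ≠ J := by rintro rfl; omega
  rcases stepTo_spec J b hne with h1 | h1 <;> apply Fin.ext <;> omega

lemma path_sum {n : ℕ} (f : Fin n → Fin n → ℝ) (hf : ∀ a b, f a b = f b a) (J : Fin n) :
    ∑ b, (if b = J then 0 else f b (stepTo J b)) =
      ∑ b, ∑ b', if b.val + 1 = b'.val then f b b' else 0 := by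
  have h1 : ∀ b, (if b = J then 0 else f b (stepTo J b)) =
      (∑ b' : Fin n, if b.val + 1 = b'.val ∧ b.val < J.val then f b b' else 0) +
      ∑ b' : Fin n, if b'.val + 1 = b.val ∧ J.val < b.val then f b' b else 0 := by
    intro b
    by_cases hb : b = J
    · subst hb
      simp
    · rw [if_neg hb]
      rcases stepTo_spec J b hb with h | h
      · rw [Finset.sum_eq_single (stepTo J b), Finset.sum_eq_zero, if_pos ⟨h.2.symm, h.1⟩,
          add_zero]
        · intro b' _
          rw [if_neg]; omega
        · intro b' _ hne
          rw [if_neg]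
          rintro ⟨h1, -⟩
          exact hne (Fin.ext (by omega))
        · simp
      · rw [Finset.sum_eq_zero, Finset.sum_eq_single (stepTo J b), if_pos ⟨h.2, h.1⟩,
          zero_add, hf]
        · intro b' _ hne
          rw [if_neg]
          rintro ⟨h1, -⟩
          exact hne (Fin.ext (by omega))
        · simp
        · intro b' _
          rw [if_neg]; omega
  rw [Finset.sum_congr rfl fun b _ => h1 b, Finset.sum_add_distrib]
  rw [Finset.sum_comm (f := fun b b' : Fin n =>
    if b'.val + 1 = b.val ∧ J.val < b.val then f b' b else 0), ← Finset.sum_add_distrib]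
  refine Finset.sum_congr rfl fun b _ => ?_
  rw [← Finset.sum_add_distrib]
  refine Finset.sum_congr rfl fun b' _ => ?_
  by_cases h : b.val + 1 = b'.val
  · by_cases h2 : b.val < J.val
    · rw [if_pos ⟨h, h2⟩, if_neg (by omega), if_pos h, add_zero]
    · rw [if_neg (by omega), if_pos ⟨h, by omega⟩, if_pos h, zero_add]
  · rw [if_neg (by omega), if_neg (by omega), if_neg h, add_zero]

/-- Sum of `x` over horizontal edges in row `a`. -/
def rowSum {m n : ℕ} (x : Sym2 (Fin m × Fin n) → ℝ) (a : Fin m) : ℝ :=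
  ∑ b : Fin n, ∑ b' : Fin n, if b.val + 1 = b'.val then x s((a, b), (a, b')) else 0

/-- Sum of `x` over vertical edges in column `b`. -/
def colSum {m n : ℕ} (x : Sym2 (Fin m × Fin n) → ℝ) (b : Fin n) : ℝ :=
  ∑ a : Fin m, ∑ a' : Fin m, if a.val + 1 = a'.val then x s((a, b), (a', b)) else 0

lemma grid_adj {m n : ℕ} (v w : Fin m × Fin n) : (gridGraph m n).Adj v w ↔
    (v.1 = w.1 ∧ v.2.val + 1 = w.2.val) ∨ (v.2 = w.2 ∧ v.1.val + 1 = w.1.val) ∨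
    (v.1 = w.1 ∧ w.2.val + 1 = v.2.val) ∨ (v.2 = w.2 ∧ w.1.val + 1 = v.1.val) := by
  unfold gridGraph
  rw [SimpleGraph.fromRel_adj]
  constructor
  · rintro ⟨-, (h | h) | (h | h)⟩
    · exact Or.inl h
    · exact Or.inr (Or.inl h)
    · exact Or.inr (Or.inr (Or.inl ⟨h.1.symm, h.2⟩))
    · exact Or.inr (Or.inr (Or.inr ⟨h.1.symm, h.2⟩))
  · intro h
    refine ⟨?_, ?_⟩
    · rintro rfl; omega
    · rcases h with h | h | h | h
      · exact Or.inl (Or.inl h)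
      · exact Or.inl (Or.inr h)
      · exact Or.inr (Or.inl ⟨h.1.symm, h.2⟩)
      · exact Or.inr (Or.inr ⟨h.1.symm, h.2⟩)

lemma edge_sum {m n : ℕ} (x : Sym2 (Fin m × Fin n) → ℝ) :
    ∑ e ∈ (gridGraph m n).edgeFinset, x e = ∑ a, rowSum x a + ∑ b, colSum x b := by
  have h1 : ∑ e ∈ (gridGraph m n).edgeFinset, x e =
      ∑ p ∈ (Finset.univ : Finset ((Fin m × Fin n) × (Fin m × Fin n))).filter
        (fun p => (p.1.1 = p.2.1 ∧ p.1.2.val + 1 = p.2.2.val) ∨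
          (p.1.2 = p.2.2 ∧ p.1.1.val + 1 = p.2.1.val)), x s(p.1, p.2) := by
    symm
    refine Finset.sum_bij (fun p _ => s(p.1, p.2)) ?_ ?_ ?_ ?_
    · rintro ⟨v, w⟩ hp
      simp only [Finset.mem_filter, Finset.mem_univ, true_and] at hp
      rw [SimpleGraph.mem_edgeFinset, SimpleGraph.mem_edgeSet, grid_adj]
      tauto
    · rintro ⟨v, w⟩ hp ⟨v', w'⟩ hp' h
      simp only [Finset.mem_filter, Finset.mem_univ, true_and] at hp hp'
      rcases Sym2.eq_iff.1 h with h | h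
      · exact Prod.ext h.1 h.2
      · obtain ⟨rfl, rfl⟩ := h
        exfalso
        simp only [Fin.ext_iff] at hp hp'
        omega
    · intro e
      induction e using Sym2.ind with
      | _ v w =>
        intro he
        rw [SimpleGraph.mem_edgeFinset, SimpleGraph.mem_edgeSet, grid_adj] at he
        rcases he with h | h | h | h
        · exact ⟨(v, w), by simpa using Or.inl h, rfl⟩
        · exact ⟨(v, w), by simpa using Or.inr h, rfl⟩
        · exact ⟨(w, v), by simpa using Or.inl ⟨h.1.symm, h.2⟩, Sym2.eq_swap⟩
        · exact ⟨(w, v), by simpa using Or.inr ⟨h.1.symm, h.2⟩, Sym2.eq_swap⟩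
    · intro p _; rfl
  rw [h1, Finset.sum_filter, Fintype.sum_prod_type]
  have h2 : ∀ v w : Fin m × Fin n,
      (if (v.1 = w.1 ∧ v.2.val + 1 = w.2.val) ∨ (v.2 = w.2 ∧ v.1.val + 1 = w.1.val)
        then x s(v, w) else 0) =
      (if w.1 = v.1 then (if v.2.val + 1 = w.2.val then x s(v, (v.1, w.2)) else 0) else 0) +
      (if w.2 = v.2 then (if v.1.val + 1 = w.1.val then x s(v, (w.1, v.2)) else 0) else 0) := by
    rintro ⟨a, b⟩ ⟨a', b'⟩
    simp only
    by_cases ha : a' = a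
    · subst ha
      by_cases hb : b' = b
      · subst hb; simp
      · have : ¬ b = b' := fun h => hb h.symm
        simp [hb, this]
    · have : ¬ a = a' := fun h => ha h.symm
      by_cases hb : b' = b
      · subst hb; simp [ha, this]
      · have : ¬ b = b' := fun h => hb h.symm
        simp [*]
  simp only [h2, Finset.sum_add_distrib]
  congr 1
  · simp only [Fintype.sum_prod_type, rowSum]
    refine Finset.sum_congr rfl fun a _ => Finset.sum_congr rfl fun b _ => ?_
    rw [Finset.sum_comm]
    simp
  · simp only [Fintype.sum_prod_type, colSum]
    rw [Finset.sum_comm]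
    refine Finset.sum_congr rfl fun a _ => Finset.sum_congr rfl fun b _ => ?_
    simp

/-- weight of the horizontal edge from `v` towards the column of `r` -/
def hW {m n : ℕ} (x : Sym2 (Fin m × Fin n) → ℝ) (r v : Fin m × Fin n) : ℝ :=
  if v.2 = r.2 then 0 else x s(v, (v.1, stepTo r.2 v.2))

/-- weight of the vertical edge from `v` towards the row of `r` -/
def vW {m n : ℕ} (x : Sym2 (Fin m × Fin n) → ℝ) (r v : Fin m × Fin n) : ℝ :=
  if v.1 = r.1 then 0 else x s(v, (stepTo r.1 v.1, v.2))

/-- the parent function of a monotone tree rooted at `r` -/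
def par {m n : ℕ} (r : Fin m × Fin n) (ch : Fin m × Fin n → Prop) (v : Fin m × Fin n) :
    Fin m × Fin n :=
  if v.1 = r.1 ∨ (v.2 ≠ r.2 ∧ ch v) then (v.1, stepTo r.2 v.2) else (stepTo r.1 v.1, v.2)

/-- the tree rooted at `r` with choices `ch` -/
def parTree {m n : ℕ} (r : Fin m × Fin n) (ch : Fin m × Fin n → Prop) :
    Finset (Sym2 (Fin m × Fin n)) :=
  (Finset.univ.erase r).image fun v => s(v, par r ch v)

/-- rank function -/
def rkF {m n : ℕ} (r v : Fin m × Fin n) : ℕ :=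
  (v.1.val - r.1.val) + (r.1.val - v.1.val) + ((v.2.val - r.2.val) + (r.2.val - v.2.val))

lemma par_spec {m n : ℕ} (r : Fin m × Fin n) (ch : Fin m × Fin n → Prop) (v : Fin m × Fin n)
    (hv : v ≠ r) : rkF r (par r ch v) < rkF r v ∧ (gridGraph m n).Adj v (par r ch v) := by
  obtain ⟨I, J⟩ := r
  obtain ⟨a, b⟩ := v
  unfold par
  split_ifs with h
  · have hb : b ≠ J := by
      rcases h with h | h
      · rintro rfl; exact hv (Prod.ext h rfl)
      · exact h.1
    rw [grid_adj]
    have := stepTo_spec J b hb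
    simp only [rkF, true_and]
    refine ⟨?_, ?_⟩ <;> omega
  · have ha : a ≠ I := fun h' => h (Or.inl h')
    rw [grid_adj]
    have := stepTo_spec I a ha
    simp only [rkF, true_and]
    refine ⟨?_, ?_⟩ <;> omega

lemma parTree_tree {m n : ℕ} (r : Fin m × Fin n) (ch : Fin m × Fin n → Prop) :
    IsSpanningTreeOn (gridGraph m n) Finset.univ (parTree r ch) := by
  have := parent_tree (gridGraph m n) r (par r ch) (rkF r)
    (fun v hv => (par_spec r ch v hv).1) (fun v hv => (par_spec r ch v hv).2)
  unfold parTree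
  convert this

lemma parTree_sum {m n : ℕ} (x : Sym2 (Fin m × Fin n) → ℝ) (r : Fin m × Fin n)
    (ch : Fin m × Fin n → Prop) :
    ∑ e ∈ parTree r ch, x e =
      ∑ v, if v.1 = r.1 ∨ (v.2 ≠ r.2 ∧ ch v) then hW x r v else vW x r v := by
  unfold parTree
  rw [Finset.sum_image, ← Finset.add_sum_erase _ _ (Finset.mem_univ r)]
  · simp only [hW, true_or, if_true, zero_add]
    refine Finset.sum_congr rfl fun v hv => ?_
    have hv := Finset.ne_of_mem_erase hv
    unfold par vW
    split_ifs with h1 h2 h3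
    · exfalso
      rcases h1 with h | h
      · exact hv (Prod.ext h h2)
      · exact h.1 h2
    · rfl
    · exact absurd (Or.inl h3) h1
    · rfl
  · intro v hv w hw h
    simp only [Finset.coe_erase, Set.mem_sdiff, Set.mem_singleton_iff] at hv hw
    exact parent_injOn r (par r ch) (rkF r)
      (fun v hv => (par_spec r ch v hv).1) v hv.2 w hw.2 h

lemma hW_sum {m n : ℕ} (x : Sym2 (Fin m × Fin n) → ℝ) (r : Fin m × Fin n) (a : Fin m) :
    ∑ b, hW x r (a, b) = rowSum x a :=
  path_sum (fun b b' => x s((a, b), (a, b'))) (fun b b' => by rw [Sym2.eq_swap]) r.2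

lemma vW_sum {m n : ℕ} (x : Sym2 (Fin m × Fin n) → ℝ) (r : Fin m × Fin n) (b : Fin n) :
    ∑ a, vW x r (a, b) = colSum x b :=
  path_sum (fun a a' => x s((a, b), (a', b))) (fun b b' => by rw [Sym2.eq_swap]) r.1

/-- averaged weight at vertex `v` for root `r` -/
def avgW {m n : ℕ} (q : ℝ) (x : Sym2 (Fin m × Fin n) → ℝ) (r v : Fin m × Fin n) : ℝ :=
  (q + if v.1 = r.1 then 1 - q else 0) * hW x r v +
    ((1 - q) + if v.2 = r.2 then q else 0) * vW x r v

lemma avgW_sum {m n : ℕ} (q : ℝ) (x : Sym2 (Fin m × Fin n) → ℝ) (r : Fin m × Fin n) :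
    ∑ v, avgW q x r v = q * ∑ a, rowSum x a + (1 - q) * rowSum x r.1 +
      ((1 - q) * ∑ b, colSum x b + q * colSum x r.2) := by
  unfold avgW
  rw [Finset.sum_add_distrib, Fintype.sum_prod_type, Fintype.sum_prod_type_right]
  have h1 : ∀ a : Fin m, ∑ b : Fin n, (q + if (a, b).1 = r.1 then 1 - q else 0) * hW x r (a, b) =
      q * rowSum x a + if a = r.1 then (1 - q) * rowSum x a else 0 := by
    intro a
    rw [← hW_sum x r a]
    split_ifs <;> simp only [Finset.mul_sum, ← Finset.sum_add_distrib, add_mul, zero_mul, add_zero]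
  have h2 : ∀ b : Fin n, ∑ a : Fin m,
      ((1 - q) + if (a, b).2 = r.2 then q else 0) * vW x r (a, b) =
      (1 - q) * colSum x b + if b = r.2 then q * colSum x b else 0 := by
    intro b
    rw [← vW_sum x r b]
    split_ifs <;> simp only [Finset.mul_sum, ← Finset.sum_add_distrib, add_mul, zero_mul, add_zero]
  rw [Finset.sum_congr rfl fun a _ => h1 a, Finset.sum_congr rfl fun b _ => h2 b]
  simp only [Finset.sum_add_distrib, ← Finset.mul_sum,
    Finset.sum_ite_eq', Finset.mem_univ, if_true]

lemma avgW_total {m n : ℕ} (q : ℝ) (x : Sym2 (Fin m × Fin n) → ℝ) :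
    ∑ r, ∑ v, avgW q x r v = n * (m * q + (1 - q)) * ∑ a, rowSum x a +
      m * (n * (1 - q) + q) * ∑ b, colSum x b := by
  simp only [avgW_sum]
  simp only [Finset.sum_add_distrib, Fintype.sum_prod_type, Finset.sum_const,
    Finset.card_univ, Fintype.card_prod, Fintype.card_fin, nsmul_eq_mul, Nat.cast_mul,
    ← Finset.mul_sum]
  ring

lemma grid_key (m n : ℕ) (hm : 2 ≤ m) (hn : 2 ≤ n) :
    ∃ c : ℝ, ∀ x : Sym2 (Fin m × Fin n) → ℝ,
      (∀ T, IsSpanningTreeOn (gridGraph m n) Finset.univ T →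
        ∑ e ∈ T, x e ≤ c * ∑ e ∈ (gridGraph m n).edgeFinset, x e) →
      (∀ T, IsSpanningTreeOn (gridGraph m n) Finset.univ T →
        ∑ e ∈ T, x e = c * ∑ e ∈ (gridGraph m n).edgeFinset, x e) := by
  have hm' : (2 : ℝ) ≤ m := by exact_mod_cast hm
  have hn' : (2 : ℝ) ≤ n := by exact_mod_cast hn
  have hd1 : (0 : ℝ) < (m - 1) * n := by apply mul_pos <;> linarith
  have hd2 : (0 : ℝ) < (n - 1) * m := by apply mul_pos <;> linarith
  obtain ⟨q, hq⟩ : ∃ q : ℝ, q = ((m - 1) * n) / ((m - 1) * n + (n - 1) * m) := ⟨_, rfl⟩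
  have hq0 : 0 < q := by rw [hq]; positivity
  have hq1 : q < 1 := by rw [hq, div_lt_one (by linarith)]; linarith
  have hqe : q * ((m - 1) * n + (n - 1) * m) = (m - 1) * n := by
    rw [hq]; exact div_mul_cancel₀ _ (by linarith)
  have hqe2 : (n : ℝ) * (m * q + (1 - q)) = m * (n * (1 - q) + q) := by linarith
  obtain ⟨c, hc⟩ : ∃ c : ℝ, c = (m * q + (1 - q)) / m := ⟨_, rfl⟩
  have hmc : (m : ℝ) * n * c = n * (m * q + (1 - q)) := by rw [hc]; field_simp
  refine ⟨c, fun x hx => ?_⟩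
  set S := ∑ e ∈ (gridGraph m n).edgeFinset, x e with hS
  have htot : ∑ r, ∑ v, avgW q x r v = m * n * c * S := by
    rw [avgW_total, hS, edge_sum, ← hqe2, ← hmc]; ring
  let ch : Fin m × Fin n → Fin m × Fin n → Prop := fun r v => vW x r v ≤ hW x r v
  let tW : Fin m × Fin n → Fin m × Fin n → ℝ := fun r v =>
    if v.1 = r.1 ∨ (v.2 ≠ r.2 ∧ ch r v) then hW x r v else vW x r v
  have hle : ∀ r v, avgW q x r v ≤ tW r v := by
    intro r v
    simp only [tW, avgW, ch]
    by_cases h1 : v.1 = r.1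
    · simp [h1, vW]
    · by_cases h2 : v.2 = r.2
      · simp [h1, h2, hW]
      · simp only [h1, h2, if_false, add_zero, false_or, ne_eq, not_false_eq_true, true_and]
        split_ifs with h3 <;> nlinarith
  have hsum : ∀ r, ∑ v, tW r v ≤ c * S := by
    intro r
    have := hx _ (parTree_tree r (ch r))
    rwa [parTree_sum] at this
  have hsum' : ∀ r, ∑ v, avgW q x r v ≤ ∑ v, tW r v :=
    fun r => Finset.sum_le_sum fun v _ => hle r v
  have hcs : ∑ _r : Fin m × Fin n, c * S = m * n * c * S := by
    simp; ring
  have heq1 : ∀ r, ∑ v, avgW q x r v = c * S := by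
    have := (Finset.sum_eq_sum_iff_of_le (s := Finset.univ)
      (fun r _ => (hsum' r).trans (hsum r))).1 (htot.trans hcs.symm)
    exact fun r => this r (Finset.mem_univ r)
  have heq2 : ∀ r v, avgW q x r v = tW r v := by
    intro r v
    have h := le_antisymm (hsum' r) ((hsum r).trans (heq1 r).ge)
    exact (Finset.sum_eq_sum_iff_of_le (fun v _ => hle r v)).1 h v (Finset.mem_univ v)
  -- corner equality
  have hP : ∀ (a a' : Fin m) (b b' : Fin n), (a.val + 1 = a'.val ∨ a'.val + 1 = a.val) →
      (b.val + 1 = b'.val ∨ b'.val + 1 = b.val) →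
      x s((a, b), (a, b')) = x s((a, b), (a', b)) := by
    intro a a' b b' ha hb
    have h := heq2 (a', b') (a, b)
    have ha' : a ≠ a' := by rintro rfl; omega
    have hb' : b ≠ b' := by rintro rfl; omega
    simp only [tW, avgW, ch, hW, vW, ha', hb', if_false, add_zero, false_or, ne_eq,
      not_false_eq_true, true_and, stepTo_eq_of_adj _ _ ha, stepTo_eq_of_adj _ _ hb] at h
    split_ifs at h with h3
    · have : (1 - q) * (x s((a, b), (a, b')) - x s((a, b), (a', b))) = 0 := by linarith
      rcases mul_eq_zero.1 this with h | h <;> linarith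
    · have : q * (x s((a, b), (a, b')) - x s((a, b), (a', b))) = 0 := by linarith
      rcases mul_eq_zero.1 this with h | h <;> linarith
  -- every vertex has a horizontal and a vertical neighbour
  have hnb : ∀ (k : ℕ) (_ : 2 ≤ k) (b : Fin k), ∃ b' : Fin k,
      b.val + 1 = b'.val ∨ b'.val + 1 = b.val := by
    intro k hk b
    by_cases h : b.val = 0
    · exact ⟨⟨1, by omega⟩, Or.inl (by simp [h])⟩
    · exact ⟨⟨b.val - 1, by omega⟩, Or.inr (by simp only; omega)⟩
  choose hN hhN using hnb n hn
  choose vN hvN using hnb m hm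
  let g : Fin m × Fin n → ℝ := fun v => x s(v, (v.1, hN v.2))
  have hg : ∀ v w, (gridGraph m n).Adj v w → x s(v, w) = g v := by
    rintro ⟨a, b⟩ ⟨a', b'⟩ h
    rw [grid_adj] at h
    simp only at h
    have h' : (a = a' ∧ (b.val + 1 = b'.val ∨ b'.val + 1 = b.val)) ∨
      (b = b' ∧ (a.val + 1 = a'.val ∨ a'.val + 1 = a.val)) := by tauto
    clear h
    rcases h' with ⟨rfl, h⟩ | ⟨rfl, h⟩
    · exact (hP a (vN a) b b' (hvN a) h).trans (hP a (vN a) b (hN b) (hvN a) (hhN b)).symm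
    · exact (hP a a' b (hN b) h (hhN b)).symm
  have hg2 : ∀ v w, (gridGraph m n).Adj v w → g v = g w := by
    intro v w h
    rw [← hg v w h, ← hg w v h.symm, Sym2.eq_swap]
  have hg3 : ∀ v w, (gridGraph m n).Reachable v w → g v = g w := by
    rintro v w ⟨p⟩
    induction p with
    | nil => rfl
    | cons h _ ih => exact (hg2 _ _ h).trans ih
  let r0 : Fin m × Fin n := (⟨0, by omega⟩, ⟨0, by omega⟩)
  have : Nonempty (Fin m × Fin n) := ⟨r0⟩
  have hT0 := parTree_tree r0 (ch r0)
  have hconst : ∀ e ∈ (gridGraph m n).edgeSet, x e = g r0 := by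
    intro e
    induction e using Sym2.ind with
    | _ v w =>
      intro he
      rw [hg v w he]
      refine hg3 v r0 ?_
      refine (hT0.2.2.2 v (Finset.mem_univ _) r0 (Finset.mem_univ _)).mono ?_
      intro u u' h
      exact hT0.1 ((SimpleGraph.fromEdgeSet_adj _).1 h).1
  have hval : ∀ T, IsSpanningTreeOn (gridGraph m n) Finset.univ T →
      ∑ e ∈ T, x e = T.card * g r0 := by
    intro T hT
    rw [Finset.sum_congr rfl fun e he => hconst e (hT.1 he)]
    simp
  intro T hT
  have h0 : ∑ e ∈ parTree r0 (ch r0), x e = c * S := by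
    rw [parTree_sum, ← heq1 r0]
    exact (Finset.sum_congr rfl fun v _ => heq2 r0 v).symm
  rw [← h0, hval T hT, hval _ hT0]
  have e1 := spanningTree_card _ T hT
  have e2 := spanningTree_card _ _ hT0
  have : T.card = (parTree r0 (ch r0)).card := by omega
  rw [this]

/-- for `m, n ≥ 2` the grid graph `G_{m,n}` is uniformizable: there are
positive edge weights `σ` such that the weighted uniform spanning tree pmf
`μ_σ(γ) = (∏_{e∈γ} σ(e)) / (∑_{γ'} ∏_{e∈γ'} σ(e))` is fair. -/
theorem gridGraph_uniformizable (m n : ℕ) (hm : 2 ≤ m) (hn : 2 ≤ n) :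
    ∃ σ : Sym2 (Fin m × Fin n) → ℝ,
      (∀ e ∈ (gridGraph m n).edgeFinset, 0 < σ e) ∧
      ∃ μ : TreePMFOn (gridGraph m n) Finset.univ,
        (∀ T : Finset (Sym2 (Fin m × Fin n)),
            μ.toFun T =
              (if IsSpanningTreeOn (gridGraph m n) Finset.univ T then ∏ e ∈ T, σ e else 0) /
                ∑ T' ∈ Finset.univ.filter
                    (fun T' : Finset (Sym2 (Fin m × Fin n)) =>
                      IsSpanningTreeOn (gridGraph m n) Finset.univ T'),
                  ∏ e ∈ T', σ e) ∧
        IsFairOn μ := by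
  obtain ⟨c, hc⟩ := grid_key m n hm hn
  exact uniformize (gridGraph m n) c
    ⟨_, parTree_tree (⟨0, by omega⟩, ⟨0, by omega⟩) fun _ => True⟩ hc
end
end
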